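/- arXiv:1402.6973 — 3 statements merged into one kernel-verified Lean document; each statement's English description precedes it below -/
import Mathlib

section
/- In any execution of algorithm Greedy, under the mapping ψ every frame can be (re-)mapped at most k times, and every frame is eventually mapped to a frame in F_G (the set of frames completed by Greedy). -/
/-! ## Model: d-uniform bounded-delay goodput ({\sc d-uBDG}) instances -/

/-- An arrival sequence for the `d`-uniform bounded-delay goodput problem:
`n` frames, each consisting of `k` unit-size packets; packet `(f, ℓ)` (the `ℓ`-th
packet of frame `f`, `0`-indexed) arrives at time `a f ℓ`, arrival times are
nondecreasing within each frame, and every packet has deadline `a f ℓ + d`. -/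
structure ArrivalSeq (n k d : ℕ) where
  a : Fin n → Fin k → ℕ
  mono : ∀ f : Fin n, Monotone (a f)

namespace ArrivalSeq

variable {n k d : ℕ}

/-- At most `b` packets arrive in any single time slot (maximum burst size `b`). -/
def BurstBound (A : ArrivalSeq n k d) (b : ℕ) : Prop :=
  ∀ t : ℕ, Set.ncard {p : Fin n × Fin k | A.a p.1 p.2 = t} ≤ b

/-- A feasible schedule: at most one packet is delivered per time slot, every packet is
delivered at most once, and every delivered packet is delivered between its arrival
time and its deadline. -/
def IsSchedule (A : ArrivalSeq n k d) (S : ℕ → Option (Fin n × Fin k)) : Prop :=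
  (∀ (p : Fin n × Fin k) (t t' : ℕ), S t = some p → S t' = some p → t = t') ∧
  ∀ (p : Fin n × Fin k) (t : ℕ), S t = some p →
    A.a p.1 p.2 ≤ t ∧ t ≤ A.a p.1 p.2 + d

/-- A frame is successful under schedule `S` if all of its packets are delivered. -/
def Successful (A : ArrivalSeq n k d) (S : ℕ → Option (Fin n × Fin k)) (f : Fin n) : Prop :=
  ∀ ℓ : Fin k, ∃ t : ℕ, S t = some (f, ℓ)

/-- The goodput of a schedule: the number of successful frames. -/
noncomputable def Goodput (A : ArrivalSeq n k d) (S : ℕ → Option (Fin n × Fin k)) : ℕ :=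
  Set.ncard {f : Fin n | A.Successful S f}

/-- `S` is an optimal (feasible) schedule for `A`. -/
def IsOptimal (A : ArrivalSeq n k d) (S : ℕ → Option (Fin n × Fin k)) : Prop :=
  A.IsSchedule S ∧
    ∀ S' : ℕ → Option (Fin n × Fin k), A.IsSchedule S' → A.Goodput S' ≤ A.Goodput S

end ArrivalSeq

/-! ## Executions of scheduling algorithms -/

/-- A trace of the execution of a scheduling algorithm on the arrival sequence `A`:
`deliver t` is the packet delivered at the scheduling substep of slot `t` (if any), and
`dropTime p` is the slot at which packet `p` is dropped by the algorithm (if ever). -/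
structure AlgExec {n k d : ℕ} (A : ArrivalSeq n k d) where
  deliver : ℕ → Option (Fin n × Fin k)
  dropTime : Fin n × Fin k → Option ℕ

namespace AlgExec

variable {n k d : ℕ} {A : ArrivalSeq n k d}

/-- packet `p` is delivered at some time `≤ t`. -/
def DeliveredBy (E : AlgExec A) (p : Fin n × Fin k) (t : ℕ) : Prop :=
  ∃ s ≤ t, E.deliver s = some p

/-- packet `p` is delivered at some point of the execution. -/
def Delivered (E : AlgExec A) (p : Fin n × Fin k) : Prop :=
  ∃ s : ℕ, E.deliver s = some p

/-- packet `p` is dropped at some time `< t`. -/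
def DroppedBefore (E : AlgExec A) (p : Fin n × Fin k) (t : ℕ) : Prop :=
  ∃ s < t, E.dropTime p = some s

/-- packet `p` is pending at (the scheduling substep of) slot `t`: it has arrived, its
deadline has not passed, and it has been neither delivered nor dropped before `t`. -/
def Pending (E : AlgExec A) (p : Fin n × Fin k) (t : ℕ) : Prop :=
  A.a p.1 p.2 ≤ t ∧ t ≤ A.a p.1 p.2 + d ∧
    ¬ (∃ s < t, E.deliver s = some p) ∧ ¬ E.DroppedBefore p t

/-- frame `f` is alive at time `t`: none of its packets has been dropped before `t`,
nor has expired (i.e., reached its deadline undelivered) before `t`. -/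
def Alive (E : AlgExec A) (f : Fin n) (t : ℕ) : Prop :=
  ∀ ℓ : Fin k, ¬ E.DroppedBefore (f, ℓ) t ∧
    (A.a f ℓ + d < t → E.DeliveredBy (f, ℓ) (A.a f ℓ + d))

/-- frame `f` has some pending packet at time `t`. -/
def HasPending (E : AlgExec A) (f : Fin n) (t : ℕ) : Prop :=
  ∃ ℓ : Fin k, E.Pending (f, ℓ) t

/-- `I_t(f)`: the index of the first (minimal-index) pending packet of `f` at time `t`. -/
noncomputable def Iidx (E : AlgExec A) (t : ℕ) (f : Fin n) : ℕ :=
  sInf {ℓ : ℕ | ∃ h : ℓ < k, E.Pending (f, ⟨ℓ, h⟩) t}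

/-- frame `f` is completed by the execution: all of its packets are delivered. -/
def Completed (E : AlgExec A) (f : Fin n) : Prop :=
  ∀ ℓ : Fin k, E.Delivered (f, ℓ)

/-- `w f`: the number of packets of frame `f` delivered by the execution. -/
noncomputable def w (E : AlgExec A) (f : Fin n) : ℕ :=
  Set.ncard {ℓ : Fin k | E.Delivered (f, ℓ)}

/-- the first time at which some packet of `f` is dropped. -/
noncomputable def dropT (E : AlgExec A) (f : Fin n) : ℕ :=
  sInf {t : ℕ | ∃ ℓ : Fin k, E.dropTime (f, ℓ) = some t}

/-- the index of the first packet of `f` to be dropped (the minimal index among the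
packets of `f` dropped at the first drop time of `f`). -/
noncomputable def firstDropIdx (E : AlgExec A) (f : Fin n) : ℕ :=
  sInf {ℓ : ℕ | ∃ h : ℓ < k, E.dropTime (f, ⟨ℓ, h⟩) = some (E.dropT f)}

/-! ### The algorithm `ProactiveGreedy` -/

/-- The defining conditions of an execution of `ProactiveGreedy` (with arbitrary
tie-breaking): at every slot `t`,
(i) a delivered packet is the first pending packet of an alive frame maximizing
`I_t` among all alive frames with pending packets;
(ii) a packet is delivered whenever some alive frame has a pending packet; and
(iii) a packet is dropped at `t` exactly when it is pending at `t` and either its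
frame is not alive at `t` (line 1 of the algorithm) or the packet delivered at `t`
belongs to a different frame (line 4: packets of all non-chosen frames are dropped). -/
def PGValid (E : AlgExec A) : Prop :=
  (∀ (t : ℕ) (f : Fin n) (ℓ : Fin k), E.deliver t = some (f, ℓ) →
      E.Alive f t ∧ E.Pending (f, ℓ) t ∧ (ℓ : ℕ) = E.Iidx t f ∧
      ∀ f' : Fin n, E.Alive f' t → E.HasPending f' t → E.Iidx t f' ≤ E.Iidx t f) ∧
  (∀ t : ℕ, (∃ f : Fin n, E.Alive f t ∧ E.HasPending f t) → E.deliver t ≠ none) ∧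
  (∀ (p : Fin n × Fin k) (t : ℕ), E.dropTime p = some t ↔
      E.Pending p t ∧
        (¬ E.Alive p.1 t ∨ ∃ q : Fin n × Fin k, E.deliver t = some q ∧ q.1 ≠ p.1))

/-! ### The mapping `φ` used in the analysis of `ProactiveGreedy` -/

open Classical in
/-- The frame onto which a frame `f ∉ F_PG` is *directly* mapped by the mapping `φ`:
the frame whose packet is delivered at the time `t_f` at which the first packet of `f`
is dropped.  Frames of `F_PG` are mapped to themselves. -/
noncomputable def phiNext (E : AlgExec A) (f : Fin n) : Fin n :=
  if E.Completed f then f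
  else
    match E.deliver (E.dropT f) with
    | some q => q.1
    | none => f

/-- the frame onto which `f` is mapped after `j` successive (re-)mappings of `φ`. -/
noncomputable def phiChain (E : AlgExec A) (f : Fin n) (j : ℕ) : Fin n :=
  (E.phiNext)^[j] f

/-- frame `f` is *directly* mapped by `φ` via the packet `q` (of the frame `q.1`):
`q` is the packet delivered at the time the first packet of `f` is dropped. -/
def PhiDirectVia (E : AlgExec A) (f : Fin n) (q : Fin n × Fin k) : Prop :=
  ¬ E.Completed f ∧ E.deliver (E.dropT f) = some q

/-- frame `f` is mapped (directly or indirectly, i.e. after re-mappings) by `φ`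
via the packet `q`; `M(q)` is the set of frames mapped via `q`. -/
def PhiMappedVia (E : AlgExec A) (f : Fin n) (q : Fin n × Fin k) : Prop :=
  ∃ j : ℕ, E.PhiDirectVia (E.phiChain f j) q

/-! ### The algorithm `Greedy` -/

/-- packet `p` is still pending after the scheduling substep of slot `t`. -/
def PendingAfter (E : AlgExec A) (p : Fin n × Fin k) (t : ℕ) : Prop :=
  E.Pending p t ∧ E.deliver t ≠ some p

/-- frame `f` is infeasible after the scheduling substep of slot `t`: for some pending
packet `(f, ℓ)` the pending packets of `f` of index `≤ ℓ` cannot all be scheduled in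
the slots `t+1, …, a f ℓ + d`. -/
noncomputable def Infeasible (E : AlgExec A) (f : Fin n) (t : ℕ) : Prop :=
  ∃ ℓ : Fin k, E.PendingAfter (f, ℓ) t ∧
    A.a f ℓ + d < t + Set.ncard {j : Fin k | j ≤ ℓ ∧ E.PendingAfter (f, j) t}

/-- The defining conditions of an execution of `Greedy` (with arbitrary tie-breaking):
at every slot `t`,
(i) a delivered packet is the first pending packet of an alive frame maximizing `I_t`
among all alive frames with pending packets;
(ii) a packet is delivered whenever some alive frame has a pending packet; and
(iii) a packet is dropped at `t` exactly when it is pending at `t`, it is not the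
packet delivered at `t`, and either its frame is not alive at `t`, or its residual
slack at `t` is `0` (it expires), or its frame becomes infeasible at `t` (cleanup). -/
noncomputable def GreedyValid (E : AlgExec A) : Prop :=
  (∀ (t : ℕ) (f : Fin n) (ℓ : Fin k), E.deliver t = some (f, ℓ) →
      E.Alive f t ∧ E.Pending (f, ℓ) t ∧ (ℓ : ℕ) = E.Iidx t f ∧
      ∀ f' : Fin n, E.Alive f' t → E.HasPending f' t → E.Iidx t f' ≤ E.Iidx t f) ∧
  (∀ t : ℕ, (∃ f : Fin n, E.Alive f t ∧ E.HasPending f t) → E.deliver t ≠ none) ∧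
  (∀ (p : Fin n × Fin k) (t : ℕ), E.dropTime p = some t ↔
      E.Pending p t ∧ E.deliver t ≠ some p ∧
        (¬ E.Alive p.1 t ∨ A.a p.1 p.2 + d = t ∨ E.Infeasible p.1 t))

/-- packet `p = (f, ℓ)` is *eligible* at time `t`: it is in the buffer (pending) at
`t`, its frame is alive at `t`, and `ℓ = I_t(f)`. -/
def Eligible (E : AlgExec A) (p : Fin n × Fin k) (t : ℕ) : Prop :=
  E.Alive p.1 t ∧ E.Pending p t ∧ (p.2 : ℕ) = E.Iidx t p.1

/-! ### The mapping `ψ` used in the analysis of `Greedy` -/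

/-- The mapping `ψ` used in the analysis of `Greedy`, relative to the set `O` of frames
of a fixed optimal schedule and the maximum burst size `b`.  Every frame of
`F_G` (completed by `Greedy`) is mapped to itself (encoded as `dm f = none`); every
frame `f ∉ F_G` is directly mapped via a packet `q` delivered by `Greedy` no later than
the drop time `t_f` of `f`, whose index is at least the index of the first dropped
packet of `f`; every delivered packet has at most `2` frames of `O` and at most `b`
frames in total directly mapped to it. -/
structure PsiMapping (E : AlgExec A) (O : Set (Fin n)) (b : ℕ) where
  dm : Fin n → Option (Fin n × Fin k)
  mapsSelf : ∀ f : Fin n, E.Completed f → dm f = none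
  mapsAll : ∀ f : Fin n, ¬ E.Completed f → ∃ q : Fin n × Fin k, dm f = some q
  viaValid : ∀ (f : Fin n) (q : Fin n × Fin k), dm f = some q →
    E.firstDropIdx f ≤ (q.2 : ℕ) ∧ ∃ t ≤ E.dropT f, E.deliver t = some q
  capO : ∀ q : Fin n × Fin k, Set.ncard {f : Fin n | f ∈ O ∧ dm f = some q} ≤ 2
  capAll : ∀ q : Fin n × Fin k, Set.ncard {f : Fin n | dm f = some q} ≤ b

namespace PsiMapping

variable {E : AlgExec A} {O : Set (Fin n)} {b : ℕ}

/-- the frame onto which `f` is directly mapped by `ψ` (itself, if `f ∈ F_G`). -/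
def next (M : PsiMapping E O b) (f : Fin n) : Fin n :=
  match M.dm f with
  | some q => q.1
  | none => f

/-- the frame onto which `f` is mapped after `j` successive (re-)mappings of `ψ`. -/
def chain (M : PsiMapping E O b) (f : Fin n) (j : ℕ) : Fin n :=
  (M.next)^[j] f

/-- frame `f` is mapped (directly or indirectly) by `ψ` via the packet `q`;
`M(q)` is the set of frames mapped via `q`. -/
def MappedVia (M : PsiMapping E O b) (f : Fin n) (q : Fin n × Fin k) : Prop :=
  ∃ j : ℕ, M.dm (M.chain f j) = some q

end PsiMapping

end AlgExec

namespace AlgExec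

theorem greedy_dropped_not_delivered {n k d : ℕ} {A : ArrivalSeq n k d} {E : AlgExec A}
    (hE : E.GreedyValid) {p : Fin n × Fin k} {s : ℕ} (hs : E.dropTime p = some s) :
    ¬ E.Delivered p := by
  rintro ⟨t, ht⟩
  obtain ⟨h1, -, h3⟩ := hE
  obtain ⟨hp, hne, -⟩ := (h3 p s).1 hs
  obtain ⟨-, hpt, -, -⟩ := h1 t p.1 p.2 ht
  rcases lt_trichotomy t s with h | h | h
  · exact hp.2.2.1 ⟨t, h, ht⟩
  · subst h
    exact hne ht
  · exact hpt.2.2.2 ⟨s, h, hs⟩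

theorem greedy_exists_drop {n k d : ℕ} {A : ArrivalSeq n k d} {E : AlgExec A}
    (hE : E.GreedyValid) {f : Fin n} (hf : ¬ E.Completed f) :
    ∃ t, ∃ ℓ : Fin k, E.dropTime (f, ℓ) = some t := by
  unfold Completed at hf
  push Not at hf
  obtain ⟨ℓ, hℓ⟩ := hf
  by_cases hd : E.DroppedBefore (f, ℓ) (A.a f ℓ + d)
  · obtain ⟨s, -, hs⟩ := hd
    exact ⟨s, ℓ, hs⟩
  · refine ⟨A.a f ℓ + d, ℓ, (hE.2.2 _ _).2 ⟨⟨Nat.le_add_right _ _, le_rfl, ?_, hd⟩, ?_, ?_⟩⟩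
    · rintro ⟨s, -, hs⟩
      exact hℓ ⟨s, hs⟩
    · intro h
      exact hℓ ⟨_, h⟩
    · exact Or.inr (Or.inl rfl)

theorem greedy_firstDropIdx {n k d : ℕ} {A : ArrivalSeq n k d} {E : AlgExec A}
    (hE : E.GreedyValid) {f : Fin n} (hf : ¬ E.Completed f) :
    ∃ h : E.firstDropIdx f < k, ¬ E.Delivered (f, ⟨E.firstDropIdx f, h⟩) := by
  have h1 : ∃ ℓ : Fin k, E.dropTime (f, ℓ) = some (E.dropT f) :=
    Nat.sInf_mem (s := {t : ℕ | ∃ ℓ : Fin k, E.dropTime (f, ℓ) = some t})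
      (greedy_exists_drop hE hf)
  obtain ⟨ℓ, hℓ⟩ := h1
  have h2 : ∃ h : E.firstDropIdx f < k,
      E.dropTime (f, ⟨E.firstDropIdx f, h⟩) = some (E.dropT f) :=
    Nat.sInf_mem (s := {ℓ : ℕ | ∃ h : ℓ < k, E.dropTime (f, ⟨ℓ, h⟩) = some (E.dropT f)})
      ⟨ℓ, ℓ.2, hℓ⟩
  obtain ⟨h, hd⟩ := h2
  exact ⟨h, greedy_dropped_not_delivered hE hd⟩

theorem greedy_delivered_prefix {n k d : ℕ} {A : ArrivalSeq n k d} {E : AlgExec A}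
    (hE : E.GreedyValid) {f : Fin n} {ℓ : Fin k} {t : ℕ} (ht : E.deliver t = some (f, ℓ))
    (j : Fin k) (hj : j ≤ ℓ) : E.Delivered (f, j) := by
  by_contra hnd
  obtain ⟨hal, hp, hI, -⟩ := hE.1 t f ℓ ht
  have hjp : E.Pending (f, j) t := by
    refine ⟨(A.mono f hj).trans hp.1, ?_, ?_, (hal j).1⟩
    · by_contra hlt
      obtain ⟨s, -, hs⟩ := (hal j).2 (not_le.1 hlt)
      exact hnd ⟨s, hs⟩
    · rintro ⟨s, -, hs⟩
      exact hnd ⟨s, hs⟩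
  have hle : E.Iidx t f ≤ (j : ℕ) := Nat.sInf_le ⟨j.2, hjp⟩
  have hjl : j = ℓ := le_antisymm hj (Fin.le_def.2 (hI ▸ hle))
  exact hnd ⟨t, hjl ▸ ht⟩

end AlgExec

/-- In any execution of `Greedy`, under the mapping `ψ` (taken with
respect to the set `O` of frames of a fixed optimal schedule) every frame is
(re-)mapped at most `k` times, and every frame is eventually mapped to a frame of
`F_G`, the set of frames completed by `Greedy`. -/
theorem greedy_remapping_length (n k d b : ℕ) (hkd : k ≤ d)
    (A : ArrivalSeq n k d) (hburst : A.BurstBound b)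
    (E : AlgExec A) (hE : E.GreedyValid)
    (S : ℕ → Option (Fin n × Fin k)) (hS : A.IsOptimal S)
    (M : AlgExec.PsiMapping E {f : Fin n | A.Successful S f} b) :
    ∀ f : Fin n, ∃ j ≤ k, E.Completed (M.chain f j) := by
  intro f
  by_contra hcon
  push Not at hcon
  have key : ∀ j ≤ k, j ≤ E.firstDropIdx (M.chain f j) := by
    intro j
    induction j with
    | zero => intro _; exact Nat.zero_le _
    | succ j ih =>
      intro hj
      have ih' := ih (by omega)
      obtain ⟨q, hq⟩ := M.mapsAll _ (hcon j (by omega))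
      obtain ⟨hle, t, -, ht⟩ := M.viaValid _ q hq
      have hnext : M.chain f (j + 1) = q.1 := by
        have h1 : M.chain f (j + 1) = M.next (M.chain f j) :=
          Function.iterate_succ_apply' _ _ _
        rw [h1, AlgExec.PsiMapping.next, hq]
      have hnc := hcon (j + 1) hj
      rw [hnext] at hnc ⊢
      obtain ⟨h, hnd⟩ := AlgExec.greedy_firstDropIdx hE hnc
      by_contra hlt
      refine hnd (AlgExec.greedy_delivered_prefix (ℓ := q.2) hE ht _ (Fin.le_def.2 ?_))
      show E.firstDropIdx q.1 ≤ (q.2 : ℕ)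
      omega
  obtain ⟨h, -⟩ := AlgExec.greedy_firstDropIdx hE (hcon k le_rfl)
  exact absurd (key k le_rfl) (by omega)
end

section
/- In any execution of algorithm Greedy on an arrival sequence with maximum burst size b, for every frame f and every ℓ ∈ {1,...,k}, the total number of frames mapped (directly or indirectly) by the mapping ψ to f via the ℓ-th packet p_ℓ ∈ f is at most b·(1+b)^{ℓ−1}. -/
/-- A packet delivered by `Greedy` from a frame that is not completed has index smaller
than the index of the first dropped packet of the frame. -/
theorem AlgExec.delivered_lt_firstDropIdx {n k d : ℕ} {A : ArrivalSeq n k d}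
    {E : AlgExec A} (hE : E.GreedyValid) {g : Fin n} (hg : ¬ E.Completed g)
    {j : Fin k} (hj : E.Delivered (g, j)) : (j : ℕ) < E.firstDropIdx g := by
  obtain ⟨h1, h2, h3⟩ := hE
  have hne : {t : ℕ | ∃ ℓ : Fin k, E.dropTime (g, ℓ) = some t}.Nonempty := by
    unfold AlgExec.Completed at hg
    push Not at hg
    obtain ⟨m, hm⟩ := hg
    by_cases hdr : ∃ s, E.dropTime (g, m) = some s
    · obtain ⟨s, hs⟩ := hdr
      exact ⟨s, m, hs⟩
    · refine ⟨A.a g m + d, m, (h3 _ _).2 ⟨⟨?_, le_rfl, ?_, ?_⟩, ?_, Or.inr (Or.inl rfl)⟩⟩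
      · exact Nat.le_add_right _ _
      · rintro ⟨s, _, hs⟩
        exact hm ⟨s, hs⟩
      · rintro ⟨s, _, hs⟩
        exact hdr ⟨s, hs⟩
      · exact fun hs => hm ⟨_, hs⟩
  have hT : ∃ ℓ : Fin k, E.dropTime (g, ℓ) = some (E.dropT g) := Nat.sInf_mem hne
  have hne2 : {ℓ : ℕ | ∃ h : ℓ < k, E.dropTime (g, ⟨ℓ, h⟩) = some (E.dropT g)}.Nonempty := by
    obtain ⟨ℓ, hℓ⟩ := hT
    exact ⟨ℓ, ℓ.2, hℓ⟩
  obtain ⟨hk, hdrop⟩ : ∃ h : E.firstDropIdx g < k,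
      E.dropTime (g, ⟨E.firstDropIdx g, h⟩) = some (E.dropT g) := Nat.sInf_mem hne2
  obtain ⟨⟨ha, hd, hnd, hndr⟩, hndT, _⟩ := (h3 _ _).1 hdrop
  obtain ⟨s, hs⟩ := hj
  obtain ⟨hal, hpend, hidx, _⟩ := h1 s g j hs
  have hsT : s ≤ E.dropT g := by
    by_contra hlt
    exact (hal ⟨E.firstDropIdx g, hk⟩).1 ⟨E.dropT g, not_le.1 hlt, hdrop⟩
  by_cases harr : A.a g ⟨E.firstDropIdx g, hk⟩ ≤ s
  · have hp : E.Pending (g, ⟨E.firstDropIdx g, hk⟩) s := by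
      refine ⟨harr, hsT.trans hd, ?_, ?_⟩
      · rintro ⟨u, hu, hu'⟩
        exact hnd ⟨u, hu.trans_le hsT, hu'⟩
      · rintro ⟨u, hu, hu'⟩
        exact hndr ⟨u, hu.trans_le hsT, hu'⟩
    have hle : E.Iidx s g ≤ E.firstDropIdx g := Nat.sInf_le ⟨hk, hp⟩
    refine lt_of_le_of_ne (hidx ▸ hle) ?_
    intro heq
    have hjj : j = ⟨E.firstDropIdx g, hk⟩ := Fin.ext heq
    rw [hjj] at hs
    rcases hsT.lt_or_eq with h | h
    · exact hnd ⟨s, h, hs⟩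
    · exact hndT (h ▸ hs)
  · by_contra hge
    have hm : A.a g ⟨E.firstDropIdx g, hk⟩ ≤ A.a g j :=
      A.mono g (show (⟨E.firstDropIdx g, hk⟩ : Fin k) ≤ j from not_lt.1 hge)
    exact harr (hm.trans hpend.1)

/-- One step of un-rolling of `MappedVia`. -/
theorem AlgExec.PsiMapping.mappedVia_cases {n k d b : ℕ} {A : ArrivalSeq n k d}
    {E : AlgExec A} (hE : E.GreedyValid) {O : Set (Fin n)} (M : AlgExec.PsiMapping E O b)
    {f : Fin n} {q : Fin n × Fin k} (h : M.MappedVia f q) :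
    ∃ g, M.dm g = some q ∧ (f = g ∨ ∃ j : Fin k, (j : ℕ) < (q.2 : ℕ) ∧
      M.MappedVia f (g, j)) := by
  obtain ⟨m, hm⟩ := h
  refine ⟨M.chain f m, hm, ?_⟩
  cases m with
  | zero => exact Or.inl rfl
  | succ m =>
    right
    have hstep : M.chain f (m + 1) = M.next (M.chain f m) :=
      Function.iterate_succ_apply' _ _ _
    rcases hdm : M.dm (M.chain f m) with _ | p
    · have : M.next (M.chain f m) = M.chain f m := by
        simp [AlgExec.PsiMapping.next, hdm]
      rw [hstep, this, hdm] at hm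
      cases hm
    · have hp : M.next (M.chain f m) = p.1 := by
        simp [AlgExec.PsiMapping.next, hdm]
      rw [hstep, hp] at hm
      rw [hstep, hp]
      refine ⟨p.2, ?_, m, hdm⟩
      have hnc : ¬ E.Completed p.1 := by
        intro hc
        rw [M.mapsSelf _ hc] at hm
        cases hm
      obtain ⟨_, t, _, ht⟩ := M.viaValid _ _ hdm
      exact (AlgExec.delivered_lt_firstDropIdx hE hnc (j := p.2) ⟨t, ht⟩).trans_le
        (M.viaValid _ _ hm).1

/-- In any execution of `Greedy` on an arrival sequence with maximum
burst size `b`, for every frame and every packet `q` of it of (0-indexed) index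
`i = q.2` (the `(i+1)`-st packet of the frame), the total number of frames mapped
(directly or indirectly) by the mapping `ψ` (taken with respect to the set `O` of
frames of a fixed optimal schedule) to that frame via `q` is at most
`b · (1 + b) ^ i`. -/
theorem greedy_mapping_load (n k d b : ℕ) (hkd : k ≤ d)
    (A : ArrivalSeq n k d) (hburst : A.BurstBound b)
    (E : AlgExec A) (hE : E.GreedyValid)
    (S : ℕ → Option (Fin n × Fin k)) (hS : A.IsOptimal S)
    (M : AlgExec.PsiMapping E {f : Fin n | A.Successful S f} b) :
    ∀ q : Fin n × Fin k,
      Set.ncard {f : Fin n | M.MappedVia f q} ≤ b * (1 + b) ^ (q.2 : ℕ) := by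
  classical
  suffices H : ∀ i : ℕ, ∀ q : Fin n × Fin k, (q.2 : ℕ) = i →
      (Finset.univ.filter fun f : Fin n => M.MappedVia f q).card ≤ b * (1 + b) ^ i by
    intro q
    have := H _ q rfl
    rwa [Set.ncard_eq_toFinset_card', Set.toFinset_ofPred]
  intro i
  induction i using Nat.strong_induction_on with
  | _ i ih =>
    intro q hq
    have hD : (Finset.univ.filter fun g : Fin n => M.dm g = some q).card ≤ b := by
      have := M.capAll q
      rwa [Set.ncard_eq_toFinset_card', Set.toFinset_ofPred] at this
    let B : Fin n → ℕ → Finset (Fin n) := fun g j =>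
      Finset.univ.filter fun f => ∃ h : j < k, M.MappedVia f (g, ⟨j, h⟩)
    have hB : ∀ g, ∀ j ∈ Finset.range i, (B g j).card ≤ b * (1 + b) ^ j := by
      intro g j hj
      by_cases h : j < k
      · have := ih j (Finset.mem_range.1 hj) (g, ⟨j, h⟩) rfl
        simpa [B, h] using this
      · simp [B, h]
    have hgeom : ∀ i : ℕ, (∑ j ∈ Finset.range i, b * (1 + b) ^ j) + 1 = (1 + b) ^ i := by
      intro i
      induction i with
      | zero => simp
      | succ i ih' =>
        rw [Finset.sum_range_succ, pow_succ]
        linarith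
    have hC : ∀ g ∈ Finset.univ.filter (fun g : Fin n => M.dm g = some q),
        (insert g ((Finset.range i).biUnion (B g))).card ≤ (1 + b) ^ i := by
      intro g _
      refine (Finset.card_insert_le _ _).trans ?_
      rw [← hgeom i]
      exact Nat.add_le_add_right
        (Finset.card_biUnion_le.trans (Finset.sum_le_sum (hB g))) 1
    refine le_trans (Finset.card_le_card ?_)
      ((Finset.card_biUnion_le_card_mul _ _ _ hC).trans (Nat.mul_le_mul_right _ hD))
    intro f hf
    obtain ⟨g, hg, hfg⟩ := AlgExec.PsiMapping.mappedVia_cases hE M (Finset.mem_filter.1 hf).2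
    refine Finset.mem_biUnion.2 ⟨g, by simpa using hg, ?_⟩
    rcases hfg with rfl | ⟨j, hj, hfj⟩
    · exact Finset.mem_insert_self _ _
    · refine Finset.mem_insert_of_mem (Finset.mem_biUnion.2 ⟨j, ?_, ?_⟩)
      · exact Finset.mem_range.2 (hq ▸ hj)
      · exact Finset.mem_filter.2 ⟨Finset.mem_univ _, j.2, hfj⟩
end

section
/- Algorithm Greedy is O(b^{k-1})-competitive for the d-uniform Bounded-Delay Goodput problem with k packets per frame and maximum burst size b: letting O be the set of frames delivered by an optimal schedule and F_G the set of frames completed by Greedy, |O \ F_G| ≤ |F_G| · 2 · Σ_{ℓ=1}^{k} (1+b)^{ℓ−1}, and hence |O| ≤ C · b^{k-1} · |F_G| for some absolute constant C (for b ≥ k). -/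
namespace AlgExec

section GreedyProof

variable {n k d : ℕ} {A : ArrivalSeq n k d} {E : AlgExec A}

lemma gv_alive (hE : E.GreedyValid) {f : Fin n} {t : ℕ}
    (h : ∀ ℓ : Fin k, ¬ E.DroppedBefore (f, ℓ) t) : E.Alive f t := by
  intro ℓ
  refine ⟨h ℓ, fun hlt => ?_⟩
  by_contra hnd
  have hp : E.Pending (f, ℓ) (A.a f ℓ + d) := by
    refine ⟨by simp, le_rfl, ?_, ?_⟩
    · rintro ⟨s, hs, hs'⟩
      exact hnd ⟨s, hs.le, hs'⟩
    · rintro ⟨s, hs, hs'⟩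
      exact h ℓ ⟨s, hs.trans hlt, hs'⟩
  have hd : E.dropTime (f, ℓ) = some (A.a f ℓ + d) :=
    (hE.2.2 (f, ℓ) _).2 ⟨hp, fun h' => hnd ⟨_, le_rfl, h'⟩, Or.inr (Or.inl rfl)⟩
  exact h ℓ ⟨_, hlt, hd⟩

lemma gv_exists_drop (hE : E.GreedyValid) {f : Fin n} (hf : ¬ E.Completed f) :
    ∃ t : ℕ, ∃ ℓ : Fin k, E.dropTime (f, ℓ) = some t := by
  by_contra hno
  push Not at hno
  apply hf
  intro ℓ
  have hal : E.Alive f (A.a f ℓ + d + 1) := gv_alive hE (by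
    rintro j ⟨s, _, hs⟩
    exact hno s j hs)
  obtain ⟨s, _, hs⟩ := (hal ℓ).2 (Nat.lt_succ_self _)
  exact ⟨s, hs⟩

lemma alive_mono {f : Fin n} {s t : ℕ} (hE : E.GreedyValid) (h : E.Alive f t) (hst : s ≤ t) :
    E.Alive f s := by
  apply gv_alive hE
  rintro ℓ ⟨u, hu, hu'⟩
  exact (h ℓ).1 ⟨u, by omega, hu'⟩

lemma pending_mono {p : Fin n × Fin k} {s t : ℕ} (h : E.Pending p t) (hst : s ≤ t)
    (ha : A.a p.1 p.2 ≤ s) : E.Pending p s := by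
  obtain ⟨h1, h2, h3, h4⟩ := h
  refine ⟨ha, by omega, ?_, ?_⟩
  · rintro ⟨u, hu, hu'⟩
    exact h3 ⟨u, by omega, hu'⟩
  · rintro ⟨u, hu, hu'⟩
    exact h4 ⟨u, by omega, hu'⟩

lemma Iidx_le {f : Fin n} {t : ℕ} {ℓ : Fin k} (h : E.Pending (f, ℓ) t) :
    E.Iidx t f ≤ (ℓ : ℕ) := Nat.sInf_le ⟨ℓ.2, h⟩

lemma Iidx_mem {f : Fin n} {t : ℕ} (h : E.HasPending f t) :
    ∃ ℓ : Fin k, (ℓ : ℕ) = E.Iidx t f ∧ E.Pending (f, ℓ) t := by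
  have hne : {ℓ : ℕ | ∃ h : ℓ < k, E.Pending (f, ⟨ℓ, h⟩) t}.Nonempty := by
    obtain ⟨ℓ, hℓ⟩ := h
    exact ⟨ℓ, ℓ.2, hℓ⟩
  obtain ⟨h1, h2⟩ := Nat.sInf_mem hne
  exact ⟨⟨_, h1⟩, rfl, h2⟩

lemma deliver_unique (hE : E.GreedyValid) {p : Fin n × Fin k} {s t : ℕ}
    (hs : E.deliver s = some p) (ht : E.deliver t = some p) : s = t := by
  obtain ⟨f, ℓ⟩ := p
  have h1 := (hE.1 s f ℓ hs).2.1.2.2.1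
  have h2 := (hE.1 t f ℓ ht).2.1.2.2.1
  rcases lt_trichotomy s t with h | h | h
  · exact (h2 ⟨s, h, hs⟩).elim
  · exact h
  · exact (h1 ⟨t, h, ht⟩).elim

/-- A frame delivered at `t` does not become infeasible at `t`. -/
lemma not_infeasible_of_deliver (hE : E.GreedyValid) (hkd : k ≤ d) {f : Fin n} {t : ℕ}
    {j₀ : Fin k} (h : E.deliver t = some (f, j₀)) : ¬ E.Infeasible f t := by
  rintro ⟨ℓ, hℓ, hlt⟩
  obtain ⟨hal, hp, hI, -⟩ := hE.1 t f j₀ h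
  have hcard : Set.ncard {j : Fin k | j ≤ ℓ ∧ E.PendingAfter (f, j) t} ≤ k := by
    have := Set.ncard_le_card {j : Fin k | j ≤ ℓ ∧ E.PendingAfter (f, j) t}
    simpa using this
  have hat : A.a f ℓ ≤ t := hℓ.1.1
  rcases hat.eq_or_lt with heq | hlt'
  · omega
  obtain ⟨t', rfl⟩ : ∃ t', t = t' + 1 := ⟨t - 1, by omega⟩
  have hj₀ : j₀ ≤ ℓ := by
    have := Iidx_le hℓ.1
    rw [← hI] at this
    exact this
  have key : ∀ j : Fin k, j ≤ ℓ → E.Pending (f, j) (t' + 1) → E.PendingAfter (f, j) t' := by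
    intro j hj hpj
    refine ⟨pending_mono hpj (Nat.le_succ _) ?_, ?_⟩
    · have := A.mono f hj
      simp only
      omega
    · intro hd
      exact hpj.2.2.1 ⟨t', Nat.lt_succ_self _, hd⟩
  have hinf : E.Infeasible f t' := by
    refine ⟨ℓ, key ℓ le_rfl hℓ.1, ?_⟩
    have hsub : insert j₀ {j : Fin k | j ≤ ℓ ∧ E.PendingAfter (f, j) (t' + 1)} ⊆
        {j : Fin k | j ≤ ℓ ∧ E.PendingAfter (f, j) t'} := by
      rintro j (rfl | ⟨hj, hj'⟩)
      · exact ⟨hj₀, key _ hj₀ hp⟩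
      · exact ⟨hj, key _ hj hj'.1⟩
    have hle := Set.ncard_le_ncard hsub (Set.toFinite _)
    rw [Set.ncard_insert_of_notMem (by
      rintro ⟨_, hh⟩
      exact hh.2 h) (Set.toFinite _)] at hle
    omega
  have hk := key ℓ le_rfl hℓ.1
  have hdrop : E.dropTime (f, ℓ) = some t' :=
    (hE.2.2 (f, ℓ) t').2 ⟨hk.1, hk.2, Or.inr (Or.inr hinf)⟩
  exact (hal ℓ).1 ⟨t', Nat.lt_succ_self _, hdrop⟩

/-- Structural facts about a frame that is not completed. -/
lemma noncompleted_structure (hE : E.GreedyValid) (hkd : k ≤ d) {f : Fin n}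
    (hf : ¬ E.Completed f) :
    ∃ (ℓ : Fin k) (s t : ℕ), A.a f ℓ ≤ s ∧ s ≤ t ∧
      (∀ (j : Fin k) (u : ℕ), E.deliver u = some (f, j) → j < ℓ) ∧
      (∀ u, s ≤ u → u ≤ t → ∃ q : Fin n × Fin k, E.deliver u = some q ∧ ℓ ≤ q.2) ∧
      (s = A.a f ℓ ∨ (A.a f ℓ < s ∧ ∃ j < ℓ, E.deliver (s - 1) = some (f, j))) ∧
      (∀ S : ℕ → Option (Fin n × Fin k), A.IsSchedule S → A.Successful S f → s = A.a f ℓ →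
        ∃ u, s ≤ u ∧ u ≤ t ∧ ∃ j : Fin k, S u = some (f, j)) := by
  classical
  have hex := gv_exists_drop hE hf
  obtain ⟨t, ⟨ℓ₀, hℓ₀⟩, htmin⟩ : ∃ t, (∃ ℓ : Fin k, E.dropTime (f, ℓ) = some t) ∧
      ∀ s < t, ¬ ∃ ℓ : Fin k, E.dropTime (f, ℓ) = some s :=
    ⟨Nat.find hex, Nat.find_spec hex, fun s hs => Nat.find_min hex hs⟩
  have hal : E.Alive f t := gv_alive hE (by
    rintro j ⟨s, hs, hs'⟩
    exact htmin s hs ⟨j, hs'⟩)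
  -- the frame becomes infeasible at `t`
  have hinf : E.Infeasible f t := by
    obtain ⟨hp, hnd, hc⟩ := (hE.2.2 (f, ℓ₀) t).1 hℓ₀
    rcases hc with hc | hc | hc
    · exact (hc hal).elim
    · refine ⟨ℓ₀, ⟨hp, hnd⟩, ?_⟩
      have : 0 < Set.ncard {j : Fin k | j ≤ ℓ₀ ∧ E.PendingAfter (f, j) t} :=
        (Set.ncard_pos (Set.toFinite _)).2 ⟨ℓ₀, le_rfl, hp, hnd⟩
      simp only at hc
      omega
    · exact hc
  have hndel : ∀ j, E.deliver t ≠ some (f, j) := fun j hj =>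
    not_infeasible_of_deliver hE hkd hj hinf
  have hpend₀ : E.HasPending f t := ⟨ℓ₀, ((hE.2.2 (f, ℓ₀) t).1 hℓ₀).1⟩
  obtain ⟨ℓ, hℓI, hℓp⟩ := Iidx_mem hpend₀
  have hmin : ∀ j, E.Pending (f, j) t → ℓ ≤ j := by
    intro j hj
    have := Iidx_le hj
    rw [← hℓI] at this
    exact this
  have hℓdrop : E.dropTime (f, ℓ) = some t :=
    (hE.2.2 (f, ℓ) t).2 ⟨hℓp, hndel ℓ, Or.inr (Or.inr hinf)⟩
  have hdelb : ∀ j < ℓ, ∃ u < t, E.deliver u = some (f, j) := by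
    intro j hj
    have haj : A.a f j ≤ A.a f ℓ := A.mono f hj.le
    have hat : A.a f ℓ ≤ t := hℓp.1
    by_contra hno
    by_cases hex : A.a f j + d < t
    · obtain ⟨s, hs, hs'⟩ := (hal j).2 hex
      exact hno ⟨s, by omega, hs'⟩
    · have : E.Pending (f, j) t := ⟨haj.trans hat, by simp only; omega, hno, (hal j).1⟩
      exact absurd (hmin j this) (not_le.2 hj)
  have hexs : ∃ s, A.a f ℓ ≤ s ∧ ∀ j < ℓ, ∃ u < s, E.deliver u = some (f, j) :=
    ⟨t, hℓp.1, hdelb⟩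
  obtain ⟨s, ⟨hs1, hs2⟩, hsmin⟩ : ∃ s, (A.a f ℓ ≤ s ∧ ∀ j < ℓ, ∃ u < s, E.deliver u = some (f, j)) ∧
      ∀ s' < s, ¬ (A.a f ℓ ≤ s' ∧ ∀ j < ℓ, ∃ u < s', E.deliver u = some (f, j)) :=
    ⟨Nat.find hexs, Nat.find_spec hexs, fun s hs => Nat.find_min hexs hs⟩
  have hst : s ≤ t := by
    by_contra hlt
    exact hsmin t (not_le.1 hlt) ⟨hℓp.1, hdelb⟩
  refine ⟨ℓ, s, t, hs1, hst, ?_, ?_, ?_, ?_⟩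
  · intro j u hu
    by_contra hj
    have hj : ℓ ≤ j := not_lt.1 hj
    obtain ⟨hau, hpu, hIu, -⟩ := hE.1 u f j hu
    have hut : u ≤ t := by
      by_contra hlt
      exact (hau ℓ).1 ⟨t, not_le.1 hlt, hℓdrop⟩
    have hut' : u < t := lt_of_le_of_ne hut (by
      rintro rfl
      exact hndel j hu)
    have haℓ : A.a f ℓ ≤ u := (A.mono f hj).trans hpu.1
    have := Iidx_le (pending_mono hℓp hut haℓ)
    rw [← hIu] at this
    have hjl : j = ℓ := le_antisymm this hj
    subst hjl
    exact hℓp.2.2.1 ⟨u, hut', hu⟩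
  · intro u hsu hut
    have hau := alive_mono hE hal hut
    have hpu : E.Pending (f, ℓ) u := pending_mono hℓp hut (hs1.trans hsu)
    have hne := hE.2.1 u ⟨f, hau, ℓ, hpu⟩
    obtain ⟨⟨g, i⟩, hq⟩ := Option.ne_none_iff_exists'.1 hne
    refine ⟨(g, i), hq, ?_⟩
    obtain ⟨-, -, hI, hmax⟩ := hE.1 u g i hq
    have h1 := hmax f hau ⟨ℓ, hpu⟩
    obtain ⟨m, hmI, hmp⟩ := Iidx_mem ⟨ℓ, hpu⟩
    have hm : ℓ ≤ m := by
      by_contra hlt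
      obtain ⟨v, hv, hv'⟩ := hs2 m (not_le.1 hlt)
      exact hmp.2.2.1 ⟨v, by omega, hv'⟩
    have hm' : (ℓ : ℕ) ≤ m := hm
    change (ℓ : ℕ) ≤ i
    omega
  · rcases hs1.eq_or_lt with h | h
    · exact Or.inl h.symm
    · refine Or.inr ⟨h, ?_⟩
      have := hsmin (s - 1) (by omega)
      push Not at this
      obtain ⟨j, hj, hno⟩ := this (by omega)
      obtain ⟨u, hu, hu'⟩ := hs2 j hj
      have : u = s - 1 := by
        by_contra hne
        exact hno u (by omega) hu'
      exact ⟨j, hj, this ▸ hu'⟩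
  · intro S hS hsucc hsa
    obtain ⟨j, hj, hjlt⟩ := hinf
    choose τ hτ using hsucc
    by_contra hno
    push Not at hno
    have hmaps : ∀ i ∈ {i : Fin k | i ≤ j ∧ E.PendingAfter (f, i) t},
        τ i ∈ Set.Ioc t (A.a f j + d) := by
      rintro i ⟨hij, hip⟩
      have h1 := hS.2 _ _ (hτ i)
      have h2 := A.mono f (hmin i hip.1)
      have h3 := A.mono f hij
      simp only at h1
      refine ⟨?_, by omega⟩
      by_contra hle
      exact hno (τ i) (by omega) (not_lt.1 hle) i (hτ i)
    have hinj : Set.InjOn τ {i : Fin k | i ≤ j ∧ E.PendingAfter (f, i) t} := by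
      intro i _ i' _ hii
      have h1 := hτ i
      rw [hii, hτ i'] at h1
      simpa using h1.symm
    have hle := Set.ncard_le_ncard_of_injOn τ hmaps hinj (Set.finite_Ioc _ _)
    rw [← Finset.coe_Ioc, Set.ncard_coe_finset, Nat.card_Ioc] at hle
    have hj2 : t ≤ A.a f j + d := hj.1.2.1
    omega

/-- If `(f,j)` is delivered at `s-1` and `(g,i)` with `i > j`, `g ≠ f` is delivered at `s`,
then `(g,i)` arrives at `s`. -/
lemma arrival_of_deliver (hE : E.GreedyValid) {f g : Fin n} {j i : Fin k} {s : ℕ}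
    (hs : E.deliver s = some (f, j)) (hg : E.deliver (s + 1) = some (g, i)) (hji : j < i)
    (hfg : g ≠ f) : A.a g i = s + 1 := by
  obtain ⟨hal, hp, hI, -⟩ := hE.1 _ _ _ hg
  obtain ⟨-, -, hI', hmax⟩ := hE.1 _ _ _ hs
  have hle : A.a g i ≤ s + 1 := hp.1
  by_contra hne
  have has : A.a g i ≤ s := by omega
  have hal' := alive_mono hE hal (Nat.le_succ s)
  have hps : E.HasPending g s := ⟨i, pending_mono hp (Nat.le_succ s) has⟩
  have h1 := hmax g hal' hps
  obtain ⟨m, hm, hmp⟩ := Iidx_mem hps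
  have hnd : E.deliver s ≠ some (g, m) := by
    rw [hs]
    intro h
    simp only [Option.some.injEq, Prod.mk.injEq] at h
    exact hfg h.1.symm
  have hndrop : ¬ E.DroppedBefore (g, m) (s + 1) := (hal m).1
  have hexp : A.a g m + d ≠ s := fun h =>
    hndrop ⟨s, Nat.lt_succ_self _, (hE.2.2 (g, m) s).2 ⟨hmp, hnd, Or.inr (Or.inl h)⟩⟩
  obtain ⟨q1, q2, q3, -⟩ := hmp
  simp only at q1 q2
  have : E.Pending (g, m) (s + 1) := by
    refine ⟨by simp only; omega, by simp only; omega, ?_, hndrop⟩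
    rintro ⟨u, hu, hu'⟩
    rcases Nat.lt_succ_iff_lt_or_eq.1 hu with h | rfl
    · exact q3 ⟨u, h, hu'⟩
    · exact hnd hu'
  have h2 := Iidx_le this
  have hji' : (j : ℕ) < i := hji
  omega

lemma geom_aux (k b G : ℕ) (c : ℕ → ℕ)
    (hc : ∀ j < k, c j ≤ G + b * ∑ i ∈ Finset.Ico (j + 1) k, c i) :
    ∑ i ∈ Finset.range k, c i ≤ G * ∑ i ∈ Finset.range k, (1 + b) ^ i := by
  have key : ∀ m ≤ k, ∑ i ∈ Finset.Ico (k - m) k, c i ≤ G * ∑ i ∈ Finset.range m, (1 + b) ^ i := by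
    intro m
    induction m with
    | zero => simp
    | succ m ih =>
      intro hm
      have ih := ih (by omega)
      have hs : k - (m + 1) + 1 = k - m := by omega
      rw [Finset.sum_eq_sum_Ico_succ_bot (by omega), hs]
      have h1 := hc (k - (m + 1)) (by omega)
      rw [hs] at h1
      have hgeo : 1 + b * ∑ i ∈ Finset.range m, (1 + b) ^ i = (1 + b) ^ m := by
        clear * -
        induction m with
        | zero => simp
        | succ m ih => rw [Finset.sum_range_succ, mul_add, ← add_assoc, ih]; ring
      rw [Finset.sum_range_succ, ← hgeo]
      have := Nat.mul_le_mul_left b ih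
      nlinarith
  have := key k le_rfl
  rw [Nat.sub_self, Nat.Ico_zero_eq_range] at this
  exact this

lemma greedy_main {b : ℕ} (hkd : k ≤ d) (hb : A.BurstBound b) (hE : E.GreedyValid)
    {S : ℕ → Option (Fin n × Fin k)} (hS : A.IsSchedule S) :
    Set.ncard {f : Fin n | A.Successful S f ∧ ¬ E.Completed f}
      ≤ Set.ncard {f : Fin n | E.Completed f} * (2 * ∑ i ∈ Finset.range k, (1 + b) ^ i) := by
  classical
  have hstr := fun f : {f : Fin n // ¬ E.Completed f} => noncompleted_structure hE hkd f.2
  choose L s t hLs hst hidx hdel htype hopt using hstr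
  choose ψ hψ hψidx using fun f => hdel f (s f) le_rfl (hst f)
  set D : Finset (Fin n × Fin k) := Finset.univ.filter (fun q => E.Delivered q) with hD
  -- type A frames are determined by their slot
  have hAinj : ∀ f f' : {f : Fin n // ¬ E.Completed f}, s f ≠ A.a f.1 (L f) → s f' ≠ A.a f'.1 (L f') → s f = s f' → f = f' := by
    intro f f' h h' hss
    obtain ⟨_, j, _, hj⟩ := (htype f).resolve_left h
    obtain ⟨_, j', _, hj'⟩ := (htype f').resolve_left h'
    rw [hss, hj'] at hj
    simp only [Option.some.injEq, Prod.mk.injEq] at hj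
    exact Subtype.ext hj.1.symm
  have hslot : ∀ f f' : {f : Fin n // ¬ E.Completed f}, ψ f = ψ f' → s f = s f' := by
    intro f f' h
    have h1 := hψ f
    rw [h] at h1
    exact deliver_unique hE h1 (hψ f')
  -- at most `b` frames are mapped to each packet
  have hfib : ∀ q ∈ D, (Finset.univ.filter (fun f : {f : Fin n // ¬ E.Completed f} => ψ f = q)).card ≤ b := by
    intro q _
    by_cases hne : ∃ f₀ : {f : Fin n // ¬ E.Completed f}, ψ f₀ = q
    swap
    · push Not at hne
      rw [Finset.filter_false_of_mem (fun f _ => hne f)]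
      simp
    obtain ⟨f₀, hf₀⟩ := hne
    refine le_trans ?_ (hb (s f₀))
    rw [← Set.ncard_coe_finset]
    have hsf : ∀ f : {f : Fin n // ¬ E.Completed f}, ψ f = q → s f = s f₀ := fun f hf => hslot f f₀ (hf.trans hf₀.symm)
    have hLne : ∀ f : {f : Fin n // ¬ E.Completed f}, (f.1, L f) ≠ q := by
      intro f hf
      have h1 := hψ f₀
      rw [hf₀, ← hf] at h1
      exact lt_irrefl _ (hidx f (L f) _ h1)
    refine Set.ncard_le_ncard_of_injOn
      (fun f : {f : Fin n // ¬ E.Completed f} => if s f = A.a f.1 (L f) then (f.1, L f) else q) ?_ ?_ (Set.toFinite _)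
    · intro f hf
      have hfq : ψ f = q := by simpa using hf
      by_cases h : s f = A.a f.1 (L f)
      · simp only [h, if_true, Set.mem_ofPred_eq]
        rw [← h]
        exact hsf f hfq
      · simp only [h, if_false, Set.mem_ofPred_eq]
        obtain ⟨hlt, j, hj, hjd⟩ := (htype f).resolve_left h
        obtain ⟨s', hs'⟩ : ∃ s', s f = s' + 1 := ⟨s f - 1, by omega⟩
        have h1 := hψ f
        have h2 := hψidx f
        rw [hfq] at h1 h2
        rw [hs'] at hjd h1
        rw [← hsf f hfq, hs']
        refine arrival_of_deliver hE hjd h1 (hj.trans_le h2) ?_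
        intro hqf
        have h3 : E.deliver (s' + 1) = some (f.1, q.2) := by rw [h1, ← hqf]
        exact absurd (hidx f _ _ h3) (not_lt.2 h2)
    · intro f hf f' hf' heq
      have hfq : ψ f = q := by simpa using hf
      have hfq' : ψ f' = q := by simpa using hf'
      by_cases h : s f = A.a f.1 (L f) <;> by_cases h' : s f' = A.a f'.1 (L f')
      · simp only [if_pos h, if_pos h', Prod.mk.injEq] at heq
        exact Subtype.ext heq.1
      · simp only [if_pos h, if_neg h'] at heq
        exact (hLne f heq).elim
      · simp only [if_neg h, if_pos h'] at heq
        exact (hLne f' heq.symm).elim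
      · exact hAinj f f' h h' ((hsf f hfq).trans (hsf f' hfq').symm)
  set c : ℕ → ℕ := fun j => (D.filter (fun q => (q.2 : ℕ) = j)).card with hcdef
  set G := Set.ncard {f : Fin n | E.Completed f} with hG
  have hDc : D.card = ∑ i ∈ Finset.range k, c i :=
    Finset.card_eq_sum_card_fiberwise (fun q _ => by simp)
  have hc : ∀ j < k, c j ≤ G + b * ∑ i ∈ Finset.Ico (j + 1) k, c i := by
    intro j hj
    -- frames with packet `j` delivered are completed, or mapped to a packet of larger index
    have h1 : c j ≤ G + (Finset.univ.filter (fun f : {f : Fin n // ¬ E.Completed f} => j < ((ψ f).2 : ℕ))).card := by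
      have hsub : (D.filter (fun q => (q.2 : ℕ) = j)).image Prod.fst ⊆
          Finset.univ.filter (fun f => E.Completed f) ∪
          (Finset.univ.filter (fun f : {f : Fin n // ¬ E.Completed f} => j < ((ψ f).2 : ℕ))).image Subtype.val := by
        intro f hf
        simp only [Finset.mem_image, Finset.mem_filter, hD, Finset.mem_univ, true_and] at hf
        obtain ⟨⟨f', i⟩, ⟨⟨u, hu⟩, hi⟩, rfl⟩ := hf
        simp only [Finset.mem_union, Finset.mem_filter, Finset.mem_univ, true_and,
          Finset.mem_image]
        by_cases hcomp : E.Completed f'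
        · exact Or.inl hcomp
        · refine Or.inr ⟨⟨f', hcomp⟩, ?_, rfl⟩
          have h1 : (i : ℕ) < L ⟨f', hcomp⟩ := hidx ⟨f', hcomp⟩ i u hu
          have h2 : (L ⟨f', hcomp⟩ : ℕ) ≤ (ψ ⟨f', hcomp⟩).2 := hψidx ⟨f', hcomp⟩
          simp only at hi
          omega
      have hcard := (Finset.card_le_card hsub).trans (Finset.card_union_le _ _)
      rw [Finset.card_image_of_injOn] at hcard
      · refine hcard.trans (add_le_add ?_ Finset.card_image_le)
        rw [hG, ← Set.ncard_coe_finset]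
        apply le_of_eq
        congr 1
        ext f
        simp
      · rintro ⟨f, i⟩ hq ⟨f', i'⟩ hq' h
        simp only [Finset.coe_filter, Set.mem_ofPred_eq] at hq hq' h
        refine Prod.ext h (Fin.ext ?_)
        simp only
        omega
    refine h1.trans (add_le_add le_rfl ?_)
    have h2 : (Finset.univ.filter (fun f : {f : Fin n // ¬ E.Completed f} => j < ((ψ f).2 : ℕ))).card ≤
        b * (D.filter (fun q => j < (q.2 : ℕ))).card := by
      refine Finset.card_le_mul_card_image_of_maps_to (f := ψ) ?_ b ?_
      · intro f hf
        simp only [Finset.mem_filter, Finset.mem_univ, true_and, hD] at hf ⊢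
        exact ⟨⟨_, hψ f⟩, hf⟩
      · intro q hq
        refine le_trans (Finset.card_le_card ?_) (hfib q (Finset.mem_filter.1 hq).1)
        intro f hf
        simp only [Finset.mem_filter, Finset.mem_univ, true_and] at hf ⊢
        exact hf.2
    refine h2.trans (Nat.mul_le_mul_left _ (le_of_eq ?_))
    rw [Finset.card_eq_sum_card_fiberwise (f := fun q : Fin n × Fin k => (q.2 : ℕ))
      (t := Finset.Ico (j + 1) k)]
    · apply Finset.sum_congr rfl
      intro i hi
      simp only [hcdef]
      congr 1
      ext q
      simp only [Finset.mem_filter, Finset.mem_Ico] at hi ⊢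
      constructor
      · rintro ⟨⟨h1, h2⟩, h3⟩
        exact ⟨h1, h3⟩
      · rintro ⟨h1, h3⟩
        exact ⟨⟨h1, by omega⟩, h3⟩
    · intro q hq
      have := (Finset.mem_filter.1 hq).2
      simp only [Finset.coe_Ico, Set.mem_Ico]
      exact ⟨this, q.2.2⟩
  have hgeo := geom_aux k b G c hc
  rw [← hDc] at hgeo
  -- each delivered packet receives at most two frames of the optimal schedule
  have hO : Set.ncard {f : Fin n | A.Successful S f ∧ ¬ E.Completed f} ≤ D.card * 2 := by
    have hth : ∀ f : {f : Fin n // A.Successful S f ∧ ¬ E.Completed f},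
        ∃ (q : Fin n × Fin k) (u : ℕ), E.deliver u = some q ∧
          ((s ⟨f.1, f.2.2⟩ ≠ A.a f.1 (L ⟨f.1, f.2.2⟩) ∧ u = s ⟨f.1, f.2.2⟩) ∨
           (s ⟨f.1, f.2.2⟩ = A.a f.1 (L ⟨f.1, f.2.2⟩) ∧ ∃ j : Fin k, S u = some (f.1, j))) := by
      intro f
      by_cases h : s ⟨f.1, f.2.2⟩ = A.a f.1 (L ⟨f.1, f.2.2⟩)
      · obtain ⟨u, h1, h2, j, hj⟩ := hopt ⟨f.1, f.2.2⟩ S hS f.2.1 h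
        obtain ⟨q, hq, _⟩ := hdel ⟨f.1, f.2.2⟩ u h1 h2
        exact ⟨q, u, hq, Or.inr ⟨h, j, hj⟩⟩
      · exact ⟨_, _, hψ ⟨f.1, f.2.2⟩, Or.inl ⟨h, rfl⟩⟩
    choose θ u hθ hu using hth
    have hcard : Fintype.card {f : Fin n // A.Successful S f ∧ ¬ E.Completed f} ≤
        (D ×ˢ (Finset.univ : Finset Bool)).card := by
      rw [← Finset.card_univ]
      refine Finset.card_le_card_of_injOn
        (fun f => (θ f, decide (s ⟨f.1, f.2.2⟩ = A.a f.1 (L ⟨f.1, f.2.2⟩)))) ?_ ?_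
      · intro f _
        simp only [Finset.coe_product, Set.mem_prod, hD, Finset.coe_univ, Set.mem_univ, and_true,
          Finset.coe_filter, Set.mem_ofPred_eq, Finset.mem_univ, true_and]
        exact ⟨_, hθ f⟩
      · intro f _ f' _ heq
        simp only [Prod.mk.injEq, decide_eq_decide] at heq
        obtain ⟨hq, hty⟩ := heq
        have huu : u f = u f' := by
          have h1 := hθ f
          rw [hq] at h1
          exact deliver_unique hE h1 (hθ f')
        rcases hu f with ⟨h, h1⟩ | ⟨h, j, hj⟩
        · rcases hu f' with ⟨h', h1'⟩ | ⟨h', j', hj'⟩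
          · have := hAinj ⟨f.1, f.2.2⟩ ⟨f'.1, f'.2.2⟩ h h' (by rw [← h1, ← h1', huu])
            exact Subtype.ext (Subtype.mk.inj this)
          · exact (h (hty.2 h')).elim
        · rcases hu f' with ⟨h', h1'⟩ | ⟨h', j', hj'⟩
          · exact (h' (hty.1 h)).elim
          · rw [huu, hj'] at hj
            simp only [Option.some.injEq, Prod.mk.injEq] at hj
            exact Subtype.ext hj.1.symm
    rw [Finset.card_product] at hcard
    rw [← Nat.card_eq_fintype_card, Finset.card_univ, Fintype.card_bool] at hcard
    rw [← Nat.card_coe_set_eq]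
    exact hcard
  calc _ ≤ D.card * 2 := hO
    _ ≤ (G * ∑ i ∈ Finset.range k, (1 + b) ^ i) * 2 := Nat.mul_le_mul_right _ hgeo
    _ = _ := by ring

lemma geom_real_bound {k b : ℕ} (hk : 1 ≤ k) (hkb : k ≤ b) :
    ∑ i ∈ Finset.range k, (1 + (b : ℝ)) ^ i ≤ Real.exp 1 * (b : ℝ) ^ (k - 1) := by
  have hb : (0 : ℝ) < b := by exact_mod_cast (by omega : 0 < b)
  have h1 : (∑ i ∈ Finset.range k, (1 + (b : ℝ)) ^ i) * b ≤ (1 + (b : ℝ)) ^ k := by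
    have := geom_sum_mul (1 + (b : ℝ)) k
    rw [add_sub_cancel_left] at this
    linarith
  have h2 : (1 + (b : ℝ)) ^ k ≤ Real.exp 1 * (b : ℝ) ^ k := by
    have h3 : 1 + (b : ℝ) = (1 + 1 / b) * b := by field_simp; ring
    rw [h3, mul_pow]
    refine mul_le_mul_of_nonneg_right ?_ (by positivity)
    have h4 : 1 + 1 / (b : ℝ) ≤ Real.exp (1 / b) := by
      have := Real.add_one_le_exp (1 / (b : ℝ))
      linarith
    calc (1 + 1 / (b : ℝ)) ^ k ≤ (1 + 1 / (b : ℝ)) ^ b :=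
          pow_le_pow_right₀ (by have : 0 < 1 / (b : ℝ) := by positivity
                                linarith) hkb
      _ ≤ (Real.exp (1 / b)) ^ b := by gcongr
      _ = Real.exp 1 := by
          rw [← Real.exp_nat_mul]
          congr 1
          field_simp
  have h5 : (b : ℝ) ^ k = (b : ℝ) ^ (k - 1) * b := by
    rw [← pow_succ]
    congr 1
    omega
  rw [h5, ← mul_assoc] at h2
  exact le_of_mul_le_mul_right (h1.trans h2) hb

end GreedyProof

end AlgExec

/-- `Greedy` is `O(b^(k-1))`-competitive for the `d`-uniform
bounded-delay goodput problem with `k` packets per frame and maximum burst size `b`: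
letting `O` be the set of frames delivered by an optimal schedule and `F_G` the set of
frames completed by `Greedy`, `|O \ F_G| ≤ |F_G| · 2 · Σ_{i<k} (1+b)^i`, and hence
(for `b ≥ k`) `|O| ≤ C · b^(k-1) · |F_G|` for some absolute constant `C`. -/
theorem greedy_competitive_ratio :
    ∃ C : ℝ, 0 < C ∧
      ∀ (n k d b : ℕ) (A : ArrivalSeq n k d) (E : AlgExec A)
        (S : ℕ → Option (Fin n × Fin k)),
        1 ≤ k → k ≤ d → A.BurstBound b → E.GreedyValid → A.IsOptimal S →
        (Set.ncard {f : Fin n | A.Successful S f ∧ ¬ E.Completed f}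
            ≤ Set.ncard {f : Fin n | E.Completed f} *
              (2 * ∑ i ∈ Finset.range k, (1 + b) ^ i)) ∧
        (k ≤ b →
          (Set.ncard {f : Fin n | A.Successful S f} : ℝ)
            ≤ C * (b : ℝ) ^ (k - 1) *
              (Set.ncard {f : Fin n | E.Completed f} : ℝ)) := by
  refine ⟨1 + 2 * Real.exp 1, by positivity, ?_⟩
  intro n k d b A E S hk hkd hb hE hS
  have h1 := AlgExec.greedy_main hkd hb hE hS.1
  refine ⟨h1, fun hkb => ?_⟩
  have h2 : Set.ncard {f : Fin n | A.Successful S f} ≤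
      Set.ncard {f : Fin n | E.Completed f} +
        Set.ncard {f : Fin n | A.Successful S f ∧ ¬ E.Completed f} := by
    refine (Set.ncard_le_ncard ?_ (Set.toFinite _)).trans (Set.ncard_union_le _ _)
    intro f hf
    by_cases hc : E.Completed f
    · exact Or.inl hc
    · exact Or.inr ⟨hf, hc⟩
  have h3 := h2.trans (Nat.add_le_add_left h1 _)
  have h4 : (Set.ncard {f : Fin n | A.Successful S f} : ℝ) ≤
      (Set.ncard {f : Fin n | E.Completed f} : ℝ) +
        (Set.ncard {f : Fin n | E.Completed f} : ℝ) *
          (2 * ∑ i ∈ Finset.range k, (1 + (b : ℝ)) ^ i) := by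
    exact_mod_cast h3
  have h5 := AlgExec.geom_real_bound hk hkb
  have h6 : (1 : ℝ) ≤ (b : ℝ) ^ (k - 1) :=
    one_le_pow₀ (by exact_mod_cast (by omega : 1 ≤ b))
  have hG : (0 : ℝ) ≤ (Set.ncard {f : Fin n | E.Completed f} : ℝ) := Nat.cast_nonneg _
  refine h4.trans ?_
  have h7 : 1 + 2 * ∑ i ∈ Finset.range k, (1 + (b : ℝ)) ^ i ≤
      (1 + 2 * Real.exp 1) * (b : ℝ) ^ (k - 1) := by linarith
  have h8 := mul_le_mul_of_nonneg_left h7 hG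
  linarith
end
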